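/- arXiv:2003.11007 — 6 statements merged into one kernel-verified Lean document; each statement's English description precedes it below -/
import Mathlib

section
/- Let A, B, C be complex inner product spaces and let m : A →ₗ[ℂ] B →ₗ[ℂ] C be a bilinear map that factorizes inner products. Then the induced linear map TensorProduct.lift m : A ⊗[ℂ] B →ₗ[ℂ] C is injective. -/
open scoped InnerProductSpace TensorProduct

/-- If a bilinear map factorizes inner products, then its lift to the tensor product preserves
inner products. -/
theorem inner_lift_lift_of_factorizes
    {A B C : Type*}
    [NormedAddCommGroup A] [InnerProductSpace ℂ A]
    [NormedAddCommGroup B] [InnerProductSpace ℂ B]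
    [NormedAddCommGroup C] [InnerProductSpace ℂ C]
    (m : A →ₗ[ℂ] B →ₗ[ℂ] C)
    (hm : ∀ (a a' : A) (b b' : B), ⟪m a b, m a' b'⟫_ℂ = ⟪a, a'⟫_ℂ * ⟪b, b'⟫_ℂ)
    (x y : A ⊗[ℂ] B) :
    ⟪TensorProduct.lift m x, TensorProduct.lift m y⟫_ℂ = ⟪x, y⟫_ℂ := by
  induction x with
  | zero => simp
  | add x₁ x₂ h₁ h₂ => simp [inner_add_left, h₁, h₂]
  | tmul a b =>
    induction y with
    | zero => simp
    | add y₁ y₂ h₁ h₂ => rw [map_add, inner_add_right, inner_add_right, h₁, h₂]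
    | tmul a' b' => simp [hm]

/-- If `m : A →ₗ[ℂ] B →ₗ[ℂ] C` is a bilinear map between complex inner product spaces
that factorizes inner products, then `TensorProduct.lift m` is injective. -/
theorem bilinear_factorizing_lift_injective
    {A B C : Type*}
    [NormedAddCommGroup A] [InnerProductSpace ℂ A]
    [NormedAddCommGroup B] [InnerProductSpace ℂ B]
    [NormedAddCommGroup C] [InnerProductSpace ℂ C]
    (m : A →ₗ[ℂ] B →ₗ[ℂ] C)
    (hm : ∀ (a a' : A) (b b' : B), ⟪m a b, m a' b'⟫_ℂ = ⟪a, a'⟫_ℂ * ⟪b, b'⟫_ℂ) :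
    Function.Injective (TensorProduct.lift m) := by
  exact ((TensorProduct.lift m).isometryOfInner (inner_lift_lift_of_factorizes m hm)).injective
end

section
/- Let X and Y be complex Hilbert spaces with X separable, and let f : Projectivization ℂ X → Projectivization ℂ Y be a map that preserves transition probabilities. Then there exists a map m : X → Y such that m v ≠ 0 and Projectivization.mk (m v) = f (Projectivization.mk v) for every nonzero v ∈ X, and such that either m is ℂ-linear with ⟪m v, m w⟫ = ⟪v, w⟫ for all v, w ∈ X, or m is conjugate-linear (additive with m (c • v) = (starRingEnd ℂ c) • m v) with ⟪m v, m w⟫ = ⟪w, v⟫ for all v, w ∈ X. -/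
open scoped InnerProductSpace

section Wigner

variable {V X Y : Type*} [NormedAddCommGroup V] [InnerProductSpace ℂ V]
  [NormedAddCommGroup X] [InnerProductSpace ℂ X] [NormedAddCommGroup Y] [InnerProductSpace ℂ Y]

/-- A map that preserves the moduli of inner products preserves norms. -/
lemma norm_map_of_norm_inner_map {T : X → Y} (hT : ∀ v w, ‖⟪T v, T w⟫_ℂ‖ = ‖⟪v, w⟫_ℂ‖) (v : X) :
    ‖T v‖ = ‖v‖ := by
  have h := hT v v
  simp only [inner_self_eq_norm_sq_to_K, norm_pow, RCLike.norm_ofReal, abs_norm] at h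
  exact (sq_eq_sq₀ (norm_nonneg _) (norm_nonneg _)).1 h

/-- Two vectors of the same norm attaining equality in the Cauchy-Schwarz inequality are
proportional. -/
lemma exists_smul_eq_of_norm_inner_eq {u v : Y} (hn : ‖u‖ = ‖v‖)
    (h : ‖⟪u, v⟫_ℂ‖ = ‖u‖ * ‖v‖) : ∃ k : ℂ, k ≠ 0 ∧ v = k • u := by
  rcases eq_or_ne u 0 with rfl | hu
  · exact ⟨1, one_ne_zero, by simpa [eq_comm] using hn⟩
  · have hv : v ≠ 0 := by
      rw [← norm_ne_zero_iff] at hu ⊢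
      rwa [← hn]
    exact (norm_inner_eq_norm_iff hu hv).1 h

/-- A map preserving the moduli of inner products respects proportionality. -/
lemma exists_map_eq_smul_map_smul {T : X → Y} (hT : ∀ v w, ‖⟪T v, T w⟫_ℂ‖ = ‖⟪v, w⟫_ℂ‖) {c : ℂ}
    (hc : c ≠ 0) (u : X) : ∃ k : ℂ, k ≠ 0 ∧ T u = k • T (c • u) := by
  have hn := norm_map_of_norm_inner_map hT
  have hc' : (‖c‖ : ℂ) ≠ 0 := by simpa using hc
  obtain ⟨l, hl, hlu⟩ := exists_smul_eq_of_norm_inner_eq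
    (u := T (c • u)) (v := (‖c‖ : ℂ) • T u) (by simp [norm_smul, hn]) (by
      rw [inner_smul_right, norm_mul, hT, inner_smul_left, norm_mul, norm_smul, hn, hn, norm_smul,
        inner_self_eq_norm_sq_to_K]
      simp
      ring)
  exact ⟨(‖c‖ : ℂ)⁻¹ * l, mul_ne_zero (inv_ne_zero hc') hl, by
    rw [mul_smul, ← hlu, inv_smul_smul₀ hc']⟩

/-- A map that preserves real parts of inner products is additive. -/
lemma map_add_of_re_inner_map {S : V → Y} (hre : ∀ x y, (⟪S x, S y⟫_ℂ).re = (⟪x, y⟫_ℂ).re)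
    (x y : V) : S (x + y) = S x + S y := by
  rw [← sub_eq_zero, ← inner_self_eq_zero (𝕜 := ℂ), ← inner_self_ofReal_re (𝕜 := ℂ)]
  have h : (⟪S (x + y) - (S x + S y), S (x + y) - (S x + S y)⟫_ℂ).re =
      (⟪(x + y) - (x + y), (x + y) - (x + y)⟫_ℂ).re := by
    simp only [inner_sub_left, inner_sub_right, inner_add_left, inner_add_right, Complex.sub_re,
      Complex.add_re, hre]
    ring
  rw [sub_self, inner_zero_left] at h
  simpa using h

/-- A map that preserves real parts of inner products is homogeneous over the reals. -/
lemma map_ofReal_smul_of_re_inner_map {S : V → Y}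
    (hre : ∀ x y, (⟪S x, S y⟫_ℂ).re = (⟪x, y⟫_ℂ).re) (r : ℝ) (x : V) :
    S ((r : ℂ) • x) = (r : ℂ) • S x := by
  rw [← sub_eq_zero, ← inner_self_eq_zero (𝕜 := ℂ), ← inner_self_ofReal_re (𝕜 := ℂ)]
  have h : (⟪S ((r : ℂ) • x) - (r : ℂ) • S x, S ((r : ℂ) • x) - (r : ℂ) • S x⟫_ℂ).re =
      (⟪(r : ℂ) • x - (r : ℂ) • x, (r : ℂ) • x - (r : ℂ) • x⟫_ℂ).re := by
    simp only [inner_sub_left, inner_sub_right, inner_smul_left, inner_smul_right, Complex.sub_re,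
      Complex.conj_ofReal, Complex.re_ofReal_mul, hre]
    ring
  rw [sub_self, inner_zero_left] at h
  simpa using h

/-- A map preserving both the real parts and the moduli of inner products sends multiplication by
`Complex.I` to multiplication by `Complex.I` or by `-Complex.I`, uniformly. -/
lemma map_I_smul_of_re_inner_map {S : V → Y}
    (hre : ∀ x y, (⟪S x, S y⟫_ℂ).re = (⟪x, y⟫_ℂ).re)
    (hnorm : ∀ x y, ‖⟪S x, S y⟫_ℂ‖ = ‖⟪x, y⟫_ℂ‖) :
    (∀ x, S (Complex.I • x) = Complex.I • S x) ∨ ∀ x, S (Complex.I • x) = -(Complex.I • S x) := by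
  have hadd := map_add_of_re_inner_map hre
  have hpt : ∀ x, S (Complex.I • x) = Complex.I • S x ∨ S (Complex.I • x) = -(Complex.I • S x) := by
    intro x
    have hn := norm_map_of_norm_inner_map hnorm
    rcases eq_or_ne (S x) 0 with h0 | h0
    · left
      rw [h0, smul_zero, ← norm_eq_zero, hn, norm_smul, ← hn x, h0, norm_zero, mul_zero]
    obtain ⟨k, -, hk⟩ := exists_smul_eq_of_norm_inner_eq (u := S x) (v := S (Complex.I • x))
      (by simp [hn, norm_smul])
      (by rw [hnorm, hn, hn]; simp [norm_smul, sq])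
    have hr := hre x (Complex.I • x)
    have hk1 : ‖k‖ = 1 := by
      have := congrArg norm hk
      rw [norm_smul, hn, norm_smul, Complex.norm_I, one_mul, ← hn x] at this
      exact (mul_eq_right₀ (norm_ne_zero_iff.2 h0)).1 this.symm
    have hkre : k.re = 0 := by
      rw [hk, inner_smul_right, inner_smul_right, inner_self_eq_norm_sq_to_K,
        inner_self_eq_norm_sq_to_K] at hr
      have h0' : ‖S x‖ ≠ 0 := norm_ne_zero_iff.2 h0
      simpa [← Complex.ofReal_pow, h0'] using hr
    have hkim : k.im = 1 ∨ k.im = -1 := by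
      have := Complex.sq_norm k
      rw [hk1, Complex.normSq_apply, hkre] at this
      exact mul_self_eq_one_iff.1 (by linarith)
    rcases hkim with h | h
    · left
      rw [hk, show k = Complex.I from Complex.ext (by simpa using hkre) (by simpa using h)]
    · right
      rw [hk, show k = -Complex.I from Complex.ext (by simpa using hkre) (by simpa using h),
        neg_smul]
  by_contra! hcon
  obtain ⟨⟨x, hx⟩, y, hy⟩ := hcon
  have hx' := (hpt x).resolve_left hx
  have hy' := (hpt y).resolve_right hy
  rcases hpt (x + y) with h | h <;> rw [smul_add, hadd, hadd, smul_add] at h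
  · rw [hy', add_left_inj] at h
    exact hx h
  · rw [hx', neg_add, add_right_inj] at h
    exact hy h

/-- A map preserving both the real parts and the moduli of inner products is a linear or
conjugate-linear isometry. -/
lemma exists_ringHom_semilinear_of_re_inner_map {S : V → Y}
    (hre : ∀ x y, (⟪S x, S y⟫_ℂ).re = (⟪x, y⟫_ℂ).re)
    (hnorm : ∀ x y, ‖⟪S x, S y⟫_ℂ‖ = ‖⟪x, y⟫_ℂ‖) :
    ∃ σ : ℂ →+* ℂ, (σ = RingHom.id ℂ ∨ σ = starRingEnd ℂ) ∧
      (∀ (c : ℂ) x, S (c • x) = σ c • S x) ∧ ∀ x y, ⟪S x, S y⟫_ℂ = σ ⟪x, y⟫_ℂ := by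
  have hadd := map_add_of_re_inner_map hre
  have hreal := map_ofReal_smul_of_re_inner_map hre
  have him : ∀ x y : V, (⟪x, y⟫_ℂ).im = (⟪Complex.I • x, y⟫_ℂ).re := by
    intro x y
    simp
  have him' : ∀ x y : Y, (⟪x, y⟫_ℂ).im = (⟪Complex.I • x, y⟫_ℂ).re := by
    intro x y
    simp
  have hsmul : ∀ (c : ℂ) x, S (c • x) = (c.re : ℂ) • S x + (c.im : ℂ) • S (Complex.I • x) := by
    intro c x
    rw [← hreal, ← hreal, ← hadd, smul_smul, ← add_smul, Complex.re_add_im]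
  rcases map_I_smul_of_re_inner_map hre hnorm with hI | hI
  · refine ⟨RingHom.id ℂ, Or.inl rfl, fun c x => ?_, fun x y => Complex.ext (hre x y) ?_⟩
    · rw [hsmul, hI, smul_smul, ← add_smul, Complex.re_add_im, RingHom.id_apply]
    · rw [him', ← hI, hre, RingHom.id_apply, him]
  · refine ⟨starRingEnd ℂ, Or.inr rfl, fun c x => ?_, fun x y => Complex.ext ?_ ?_⟩
    · rw [hsmul, hI, smul_neg, smul_smul, ← neg_smul, ← add_smul]
      congr 1
      apply Complex.ext <;> simp
    · rw [hre, Complex.conj_re]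
    · rw [him', ← neg_neg (Complex.I • S x), ← hI, inner_neg_left, Complex.neg_re, hre,
        Complex.conj_im, him]

/-- On the orthogonal complement of a unit vector `e`, the map sending `x` to the component
orthogonal to `T e` of the multiple of `T (e + x)` whose component along `T e` is `T e`. -/
noncomputable def wignerAffineLift (T : X → Y) (e : X) (x : (ℂ ∙ e)ᗮ) : Y :=
  (⟪T e, T (e + x)⟫_ℂ)⁻¹ • T (e + x) - T e

/-- The overlap of `T e` with `T (e + x)` has modulus one. -/
lemma norm_inner_map_add {T : X → Y}
    (hT : ∀ v w, ‖⟪T v, T w⟫_ℂ‖ = ‖⟪v, w⟫_ℂ‖) {e : X} (he : ‖e‖ = 1) (x : (ℂ ∙ e)ᗮ) :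
    ‖⟪T e, T (e + x)⟫_ℂ‖ = 1 := by
  rw [hT, inner_add_right, Submodule.mem_orthogonal_singleton_iff_inner_right.1 x.2]
  simp [he]

lemma inner_wignerAffineLift {T : X → Y}
    (hT : ∀ v w, ‖⟪T v, T w⟫_ℂ‖ = ‖⟪v, w⟫_ℂ‖) {e : X} (he : ‖e‖ = 1) (x : (ℂ ∙ e)ᗮ) :
    ⟪T e, wignerAffineLift T e x⟫_ℂ = 0 := by
  have h : ⟪T e, T (e + x)⟫_ℂ ≠ 0 := norm_ne_zero_iff.1 (by simp [norm_inner_map_add hT he x])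
  rw [wignerAffineLift, inner_sub_right, inner_smul_right, inv_mul_cancel₀ h,
    inner_self_eq_norm_sq_to_K, norm_map_of_norm_inner_map hT, he]
  simp

lemma add_wignerAffineLift {T : X → Y}
    (hT : ∀ v w, ‖⟪T v, T w⟫_ℂ‖ = ‖⟪v, w⟫_ℂ‖) {e : X} (he : ‖e‖ = 1) (x : (ℂ ∙ e)ᗮ) :
    ∃ k : ℂ, ‖k‖ = 1 ∧ T e + wignerAffineLift T e x = k • T (e + x) :=
  ⟨(⟪T e, T (e + x)⟫_ℂ)⁻¹, by simp [norm_inner_map_add hT he x], by simp [wignerAffineLift]⟩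

lemma norm_one_add_inner_wignerAffineLift {T : X → Y}
    (hT : ∀ v w, ‖⟪T v, T w⟫_ℂ‖ = ‖⟪v, w⟫_ℂ‖) {e : X} (he : ‖e‖ = 1) (x y : (ℂ ∙ e)ᗮ) :
    ‖1 + ⟪wignerAffineLift T e x, wignerAffineLift T e y⟫_ℂ‖ = ‖1 + ⟪x, y⟫_ℂ‖ := by
  obtain ⟨k, hk, hkx⟩ := add_wignerAffineLift hT he x
  obtain ⟨l, hl, hly⟩ := add_wignerAffineLift hT he y
  have h : ‖⟪T e + wignerAffineLift T e x, T e + wignerAffineLift T e y⟫_ℂ‖ =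
      ‖⟪e + x, e + y⟫_ℂ‖ := by
    rw [hkx, hly, inner_smul_left, inner_smul_right, norm_mul, norm_mul, hT]
    simp [hk, hl]
  have hx : ⟪wignerAffineLift T e x, T e⟫_ℂ = 0 :=
    inner_eq_zero_symm.1 (inner_wignerAffineLift hT he x)
  simp only [inner_add_left, inner_add_right, inner_wignerAffineLift hT he, hx,
    Submodule.mem_orthogonal_singleton_iff_inner_right.1 y.2,
    Submodule.mem_orthogonal_singleton_iff_inner_left.1 x.2, inner_self_eq_norm_sq_to_K,
    norm_map_of_norm_inner_map hT, he] at h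
  simpa using h

lemma norm_wignerAffineLift {T : X → Y}
    (hT : ∀ v w, ‖⟪T v, T w⟫_ℂ‖ = ‖⟪v, w⟫_ℂ‖) {e : X} (he : ‖e‖ = 1) (x : (ℂ ∙ e)ᗮ) :
    ‖wignerAffineLift T e x‖ = ‖x‖ := by
  have h := norm_one_add_inner_wignerAffineLift hT he x x
  simp only [inner_self_eq_norm_sq_to_K] at h
  have key : ∀ r : ℝ, ‖1 + (r : ℂ) ^ 2‖ = 1 + r ^ 2 := by
    intro r
    rw [show (1 + (r : ℂ) ^ 2) = ((1 + r ^ 2 : ℝ) : ℂ) by push_cast; rfl, Complex.norm_real,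
      Real.norm_of_nonneg (by positivity)]
  have h' : 1 + ‖wignerAffineLift T e x‖ ^ 2 = 1 + ‖x‖ ^ 2 := by
    rw [← key, ← key]; exact h
  exact (sq_eq_sq₀ (norm_nonneg _) (norm_nonneg _)).1 (by linarith)

lemma exists_wignerAffineLift_eq_smul {T : X → Y}
    (hT : ∀ v w, ‖⟪T v, T w⟫_ℂ‖ = ‖⟪v, w⟫_ℂ‖) {e : X} (he : ‖e‖ = 1) (x : (ℂ ∙ e)ᗮ) :
    ∃ k : ℂ, k ≠ 0 ∧ wignerAffineLift T e x = k • T x := by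
  have hn := norm_map_of_norm_inner_map hT
  have hx := Submodule.mem_orthogonal_singleton_iff_inner_left.1 x.2
  obtain ⟨k, hk, hkx⟩ := add_wignerAffineLift hT he x
  have horth : ⟪T x, T e⟫_ℂ = 0 := by
    rw [← norm_eq_zero, hT, hx, norm_zero]
  apply exists_smul_eq_of_norm_inner_eq
  · rw [norm_wignerAffineLift hT he, hn, Submodule.coe_norm]
  · rw [← zero_add ⟪T x, wignerAffineLift T e x⟫_ℂ, ← horth, ← inner_add_right, hkx,
      inner_smul_right, norm_mul, hk, one_mul, hT, inner_add_right, hx, zero_add, hn,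
      norm_wignerAffineLift hT he, Submodule.coe_norm]
    simp [sq]

lemma norm_inner_wignerAffineLift {T : X → Y}
    (hT : ∀ v w, ‖⟪T v, T w⟫_ℂ‖ = ‖⟪v, w⟫_ℂ‖) {e : X} (he : ‖e‖ = 1) (x y : (ℂ ∙ e)ᗮ) :
    ‖⟪wignerAffineLift T e x, wignerAffineLift T e y⟫_ℂ‖ = ‖⟪x, y⟫_ℂ‖ := by
  have hn := norm_map_of_norm_inner_map hT
  obtain ⟨k, -, hkx⟩ := exists_wignerAffineLift_eq_smul hT he x
  obtain ⟨l, -, hly⟩ := exists_wignerAffineLift_eq_smul hT he y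
  have hx := norm_wignerAffineLift hT he x
  have hy := norm_wignerAffineLift hT he y
  rw [hkx, norm_smul, hn, Submodule.coe_norm] at hx
  rw [hly, norm_smul, hn, Submodule.coe_norm] at hy
  rcases eq_or_ne x 0 with rfl | hx0
  · have : T 0 = 0 := by simp [← norm_eq_zero, hn]
    simp [hkx, this]
  rcases eq_or_ne y 0 with rfl | hy0
  · have : T 0 = 0 := by simp [← norm_eq_zero, hn]
    simp [hly, this]
  have hk : ‖k‖ = 1 := (mul_eq_right₀ (by simpa using hx0)).1 hx
  have hl : ‖l‖ = 1 := (mul_eq_right₀ (by simpa using hy0)).1 hy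
  rw [hkx, hly, inner_smul_left, inner_smul_right, norm_mul, norm_mul, hT]
  simp [hk, hl]

lemma re_inner_wignerAffineLift {T : X → Y}
    (hT : ∀ v w, ‖⟪T v, T w⟫_ℂ‖ = ‖⟪v, w⟫_ℂ‖) {e : X} (he : ‖e‖ = 1) (x y : (ℂ ∙ e)ᗮ) :
    (⟪wignerAffineLift T e x, wignerAffineLift T e y⟫_ℂ).re = (⟪x, y⟫_ℂ).re := by
  have key : ∀ z : ℂ, ‖1 + z‖ ^ 2 = 1 + 2 * z.re + ‖z‖ ^ 2 := by
    intro z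
    simp only [Complex.sq_norm, Complex.normSq_apply, Complex.add_re, Complex.add_im,
      Complex.one_re, Complex.one_im]
    ring
  have h := key ⟪wignerAffineLift T e x, wignerAffineLift T e y⟫_ℂ
  rw [norm_one_add_inner_wignerAffineLift hT he, norm_inner_wignerAffineLift hT he, key] at h
  linarith

/-- Wigner's theorem for maps on vectors: a map preserving the moduli of inner products is, up to
nonzero scalar factors, a linear or conjugate-linear isometry. -/
theorem exists_semilinear_lift_of_norm_inner_map {T : X → Y}
    (hT : ∀ v w, ‖⟪T v, T w⟫_ℂ‖ = ‖⟪v, w⟫_ℂ‖) :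
    ∃ (m : X → Y) (σ : ℂ →+* ℂ), (∀ v, ∃ k : ℂ, k ≠ 0 ∧ m v = k • T v) ∧
      (σ = RingHom.id ℂ ∨ σ = starRingEnd ℂ) ∧ (∀ x y, m (x + y) = m x + m y) ∧
      (∀ (c : ℂ) x, m (c • x) = σ c • m x) ∧ ∀ v w, ⟪m v, m w⟫_ℂ = σ ⟪v, w⟫_ℂ := by
  have hn := norm_map_of_norm_inner_map hT
  rcases subsingleton_or_nontrivial X with hX | hX
  · refine ⟨0, RingHom.id ℂ, fun v => ⟨1, one_ne_zero, ?_⟩, Or.inl rfl, by simp, by simp,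
      fun v w => by simp [Subsingleton.elim v 0]⟩
    have : T v = 0 := by rw [← norm_eq_zero, hn, Subsingleton.elim v 0, norm_zero]
    simp [this]
  obtain ⟨e, he⟩ := exists_norm_eq X zero_le_one
  obtain ⟨σ, hσ, hsmul, hinner⟩ := exists_ringHom_semilinear_of_re_inner_map
    (re_inner_wignerAffineLift hT he) (norm_inner_wignerAffineLift hT he)
  have hadd := map_add_of_re_inner_map (re_inner_wignerAffineLift hT he)
  have hstar : ∀ c, σ (starRingEnd ℂ c) = starRingEnd ℂ (σ c) := by
    rcases hσ with rfl | rfl <;> simp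
  have hdecomp : ∀ v : X, ∃ (c : ℂ) (x : (ℂ ∙ e)ᗮ), v = c • e + x := by
    intro v
    refine ⟨⟪e, v⟫_ℂ, ⟨v - ⟪e, v⟫_ℂ • e, ?_⟩, by simp⟩
    rw [Submodule.mem_orthogonal_singleton_iff_inner_right, inner_sub_right, inner_smul_right,
      inner_self_eq_norm_sq_to_K, he]
    simp
  choose c x hcx using hdecomp
  have hin : ∀ (a b : ℂ) (y z : (ℂ ∙ e)ᗮ),
      ⟪a • e + (y : X), b • e + (z : X)⟫_ℂ = starRingEnd ℂ a * b + ⟪y, z⟫_ℂ := by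
    intro a b y z
    simp only [inner_add_left, inner_add_right, inner_smul_left, inner_smul_right,
      Submodule.mem_orthogonal_singleton_iff_inner_right.1 z.2,
      Submodule.mem_orthogonal_singleton_iff_inner_left.1 y.2, inner_self_eq_norm_sq_to_K, he,
      Submodule.coe_inner]
    simp [mul_comm]
  have huniq : ∀ v (a : ℂ) (y : (ℂ ∙ e)ᗮ), v = a • e + y → c v = a ∧ x v = y := by
    intro v a y hv
    have hc : c v = a := by
      have h1 := hin 1 (c v) 0 (x v)
      have h2 := hin 1 a 0 y
      rw [← hcx] at h1
      rw [← hv, h1] at h2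
      simpa using h2
    refine ⟨hc, Subtype.ext ?_⟩
    have h := hcx v
    rw [hc] at h
    exact add_left_cancel (h.symm.trans hv)
  refine ⟨fun v => σ (c v) • T e + wignerAffineLift T e (x v), σ, fun v => ?_, hσ,
    fun v w => ?_, fun a v => ?_, fun v w => ?_⟩
  · rcases eq_or_ne (c v) 0 with h0 | h0
    · obtain ⟨k, hk, hkx⟩ := exists_wignerAffineLift_eq_smul hT he (x v)
      refine ⟨k, hk, ?_⟩
      have hv := hcx v
      rw [h0, zero_smul, zero_add] at hv
      simp only [h0, map_zero, zero_smul, zero_add]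
      rw [hkx, ← hv]
    · have hσ0 : σ (c v) ≠ 0 := (map_ne_zero σ).2 h0
      obtain ⟨k, hk, hkx⟩ := add_wignerAffineLift hT he ((c v)⁻¹ • x v)
      have hv : v = c v • (e + (((c v)⁻¹ • x v : (ℂ ∙ e)ᗮ) : X)) := by
        rw [Submodule.coe_smul, smul_add, smul_inv_smul₀ h0]
        exact hcx v
      set u : X := e + (((c v)⁻¹ • x v : (ℂ ∙ e)ᗮ) : X)
      obtain ⟨l, hl, hlu⟩ := exists_map_eq_smul_map_smul hT h0 u
      rw [← hv] at hlu
      refine ⟨σ (c v) * k * l, mul_ne_zero (mul_ne_zero hσ0 ?_) hl, ?_⟩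
      · exact norm_ne_zero_iff.1 (by simp [hk])
      · rw [mul_smul, mul_smul, ← hlu, ← hkx, hsmul, smul_add,
          map_inv₀, smul_inv_smul₀ hσ0]
  · obtain ⟨h1, h2⟩ := huniq (v + w) (c v + c w) (x v + x w) (by
      nth_rw 1 [hcx v, hcx w]
      rw [Submodule.coe_add, add_smul]
      abel)
    simp only [h1, h2, map_add, hadd, add_smul]
    abel
  · obtain ⟨h1, h2⟩ := huniq (a • v) (a * c v) (a • x v) (by
      nth_rw 1 [hcx v]
      rw [Submodule.coe_smul, mul_smul, smul_add])
    simp only [h1, h2, map_mul, hsmul, mul_smul, smul_add]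
  · have hx : ⟪wignerAffineLift T e (x v), T e⟫_ℂ = 0 :=
      inner_eq_zero_symm.1 (inner_wignerAffineLift hT he (x v))
    have hvw := hin (c v) (c w) (x v) (x w)
    rw [← hcx, ← hcx] at hvw
    rw [hvw, map_add, map_mul, hstar, ← hinner]
    simp only [inner_add_left, inner_add_right, inner_smul_left, inner_smul_right, hx,
      inner_wignerAffineLift hT he, inner_self_eq_norm_sq_to_K, hn, he]
    simp [mul_comm]

end Wigner

/-- Wigner-type theorem / fundamental theorem of projective geometry: a map between the
projectivizations of complex Hilbert spaces (the domain separable) preserving transition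
probabilities lifts to a map on vectors that is either linear and inner-product
preserving, or conjugate-linear and inner-product conjugating. -/
theorem projectivization_transition_preserving_lift
    {X Y : Type*}
    [NormedAddCommGroup X] [InnerProductSpace ℂ X] [CompleteSpace X]
    [TopologicalSpace.SeparableSpace X]
    [NormedAddCommGroup Y] [InnerProductSpace ℂ Y] [CompleteSpace Y]
    (f : Projectivization ℂ X → Projectivization ℂ Y)
    (hf : ∀ (v w : X) (hv : v ≠ 0) (hw : w ≠ 0),
      ‖⟪(f (Projectivization.mk ℂ v hv)).rep, (f (Projectivization.mk ℂ w hw)).rep⟫_ℂ‖ ^ 2 /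
          (‖(f (Projectivization.mk ℂ v hv)).rep‖ ^ 2 *
            ‖(f (Projectivization.mk ℂ w hw)).rep‖ ^ 2)
        = ‖⟪v, w⟫_ℂ‖ ^ 2 / (‖v‖ ^ 2 * ‖w‖ ^ 2)) :
    ∃ m : X → Y,
      (∀ (v : X) (hv : v ≠ 0), ∃ hmv : m v ≠ 0,
        Projectivization.mk ℂ (m v) hmv = f (Projectivization.mk ℂ v hv)) ∧
      (((∀ x y : X, m (x + y) = m x + m y) ∧
          (∀ (c : ℂ) (x : X), m (c • x) = c • m x) ∧
          (∀ v w : X, ⟪m v, m w⟫_ℂ = ⟪v, w⟫_ℂ)) ∨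
        ((∀ x y : X, m (x + y) = m x + m y) ∧
          (∀ (c : ℂ) (x : X), m (c • x) = (starRingEnd ℂ) c • m x) ∧
          (∀ v w : X, ⟪m v, m w⟫_ℂ = ⟪w, v⟫_ℂ))) := by
  classical
  set T : X → Y := fun v => if hv : v = 0 then 0 else
    ((‖v‖ / ‖(f (Projectivization.mk ℂ v hv)).rep‖ : ℝ) : ℂ) •
      (f (Projectivization.mk ℂ v hv)).rep with hTdef
  have hTv : ∀ (v : X) (hv : v ≠ 0), T v =
      ((‖v‖ / ‖(f (Projectivization.mk ℂ v hv)).rep‖ : ℝ) : ℂ) •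
        (f (Projectivization.mk ℂ v hv)).rep := fun v hv => by simp only [hTdef, dif_neg hv]
  have hT0 : T 0 = 0 := by simp [hTdef]
  have hT : ∀ v w, ‖⟪T v, T w⟫_ℂ‖ = ‖⟪v, w⟫_ℂ‖ := by
    intro v w
    rcases eq_or_ne v 0 with rfl | hv
    · simp [hT0]
    rcases eq_or_ne w 0 with rfl | hw
    · simp [hT0]
    have h := hf v w hv hw
    have hv' := norm_ne_zero_iff.2 hv
    have hw' := norm_ne_zero_iff.2 hw
    have hfv := norm_ne_zero_iff.2 (f (Projectivization.mk ℂ v hv)).rep_nonzero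
    have hfw := norm_ne_zero_iff.2 (f (Projectivization.mk ℂ w hw)).rep_nonzero
    rw [hTv v hv, hTv w hw, inner_smul_left, inner_smul_right, Complex.conj_ofReal, norm_mul,
      norm_mul, Complex.norm_real, Complex.norm_real, Real.norm_of_nonneg (by positivity),
      Real.norm_of_nonneg (by positivity),
      ← sq_eq_sq₀ (by positivity) (norm_nonneg _)]
    rw [div_eq_div_iff (by positivity) (by positivity)] at h
    field_simp
    linear_combination h
  obtain ⟨m, σ, hm, hσ, hadd, hsmul, hinner⟩ := exists_semilinear_lift_of_norm_inner_map hT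
  refine ⟨m, fun v hv => ?_, ?_⟩
  · obtain ⟨k, hk, hkv⟩ := hm v
    have hrep := (f (Projectivization.mk ℂ v hv)).rep_nonzero
    rw [hTv v hv, smul_smul] at hkv
    have hc : k * ((‖v‖ / ‖(f (Projectivization.mk ℂ v hv)).rep‖ : ℝ) : ℂ) ≠ 0 :=
      mul_ne_zero hk (Complex.ofReal_ne_zero.2
        (div_ne_zero (norm_ne_zero_iff.2 hv) (norm_ne_zero_iff.2 hrep)))
    have hmv : m v ≠ 0 := hkv ▸ smul_ne_zero hc hrep
    refine ⟨hmv, ?_⟩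
    conv_rhs => rw [← Projectivization.mk_rep (f (Projectivization.mk ℂ v hv))]
    exact (Projectivization.mk_eq_mk_iff' ℂ _ _ hmv hrep).2 ⟨_, hkv.symm⟩
  · rcases hσ with rfl | rfl
    · exact Or.inl ⟨hadd, hsmul, hinner⟩
    · exact Or.inr ⟨hadd, hsmul, fun v w => by rw [hinner, inner_conj_symm]⟩
end

section
/- Let E be a complex inner product space and let a, b ∈ E be nonzero vectors such that for every nonzero c ∈ E the transition probabilities agree: ‖⟪a,c⟫‖^2 / (‖a‖^2 * ‖c‖^2) = ‖⟪b,c⟫‖^2 / (‖b‖^2 * ‖c‖^2). Then a and b lie on the same ray: there exists a nonzero λ ∈ ℂ with b = λ • a, i.e. Projectivization.mk a = Projectivization.mk b. -/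
open scoped InnerProductSpace

/-- Two nonzero vectors in a complex inner product space having the same transition
probabilities against every nonzero vector lie on the same ray. -/
theorem same_transition_probabilities_same_ray
    {E : Type*} [NormedAddCommGroup E] [InnerProductSpace ℂ E]
    (a b : E) (ha : a ≠ 0) (hb : b ≠ 0)
    (h : ∀ c : E, c ≠ 0 →
      ‖⟪a, c⟫_ℂ‖ ^ 2 / (‖a‖ ^ 2 * ‖c‖ ^ 2) = ‖⟪b, c⟫_ℂ‖ ^ 2 / (‖b‖ ^ 2 * ‖c‖ ^ 2)) :
    (∃ l : ℂ, l ≠ 0 ∧ b = l • a) ∧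
      Projectivization.mk ℂ a ha = Projectivization.mk ℂ b hb := by
  have ha' : ‖a‖ ≠ 0 := norm_ne_zero_iff.2 ha
  have hb' : ‖b‖ ≠ 0 := norm_ne_zero_iff.2 hb
  have hsq : ‖⟪a, b⟫_ℂ‖ ^ 2 = (‖a‖ * ‖b‖) ^ 2 := by
    have hself : ‖⟪b, b⟫_ℂ‖ = ‖b‖ * ‖b‖ := by
      rw [inner_self_eq_norm_sq_to_K]
      simp [sq]
    have hone : ‖⟪b, b⟫_ℂ‖ ^ 2 / (‖b‖ ^ 2 * ‖b‖ ^ 2) = 1 := by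
      rw [hself, mul_pow, div_self (by positivity)]
    rw [mul_pow, ← div_eq_one_iff_eq (by positivity), h b hb, hone]
  have hnorm : ‖⟪a, b⟫_ℂ‖ = ‖a‖ * ‖b‖ :=
    (sq_eq_sq₀ (norm_nonneg _) (by positivity)).1 hsq
  obtain ⟨l, hl, hlab⟩ := (norm_inner_eq_norm_iff ha hb).1 hnorm
  exact ⟨⟨l, hl, hlab⟩,
    ((Projectivization.mk_eq_mk_iff' ℂ b a hb ha).2 ⟨l, hlab.symm⟩).symm⟩
end

section
/- Let X and Y be complex inner product spaces and let f : Projectivization ℂ X → Projectivization ℂ Y be a map that preserves transition probabilities. Let e₁, e₂ ∈ X be orthonormal (unit vectors with ⟪e₁,e₂⟫ = 0) and let v₁, v₂ ∈ Y be unit vectors with f (mk e₁) = mk v₁ and f (mk e₂) = mk v₂. Then there exists k ∈ ℂ with ‖k‖ = 1 such that f (mk (e₁ + e₂)) = mk (v₁ + k • v₂). -/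
open scoped InnerProductSpace

/-- The transition probability of two rays may be computed on any nonzero representatives. -/
theorem transition_probability_rep_mk {E : Type*} [NormedAddCommGroup E] [InnerProductSpace ℂ E]
    {v w : E} (hv : v ≠ 0) (hw : w ≠ 0) :
    ‖⟪(Projectivization.mk ℂ v hv).rep, (Projectivization.mk ℂ w hw).rep⟫_ℂ‖ ^ 2 /
        (‖(Projectivization.mk ℂ v hv).rep‖ ^ 2 * ‖(Projectivization.mk ℂ w hw).rep‖ ^ 2)
      = ‖⟪v, w⟫_ℂ‖ ^ 2 / (‖v‖ ^ 2 * ‖w‖ ^ 2) := by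
  obtain ⟨a, ha⟩ := Projectivization.exists_smul_eq_mk_rep ℂ v hv
  obtain ⟨b, hb⟩ := Projectivization.exists_smul_eq_mk_rep ℂ w hw
  have ha₀ : ‖(a : ℂ)‖ ≠ 0 := norm_ne_zero_iff.mpr a.ne_zero
  have hb₀ : ‖(b : ℂ)‖ ≠ 0 := norm_ne_zero_iff.mpr b.ne_zero
  have hv₀ : ‖v‖ ≠ 0 := norm_ne_zero_iff.mpr hv
  have hw₀ : ‖w‖ ≠ 0 := norm_ne_zero_iff.mpr hw
  rw [← ha, ← hb, Units.smul_def, Units.smul_def, inner_smul_left, inner_smul_right]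
  simp only [norm_mul, norm_smul, RCLike.norm_conj]
  field_simp

/-- Equality in Bessel's inequality for an orthonormal pair. -/
theorem eq_add_of_norm_inner_sq_add_eq {E : Type*} [NormedAddCommGroup E]
    [InnerProductSpace ℂ E] {v₁ v₂ w : E} (hv₁ : ‖v₁‖ = 1) (hv₂ : ‖v₂‖ = 1)
    (horth : ⟪v₁, v₂⟫_ℂ = 0)
    (hw : ‖⟪v₁, w⟫_ℂ‖ ^ 2 + ‖⟪v₂, w⟫_ℂ‖ ^ 2 = ‖w‖ ^ 2) :
    w = ⟪v₁, w⟫_ℂ • v₁ + ⟪v₂, w⟫_ℂ • v₂ := by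
  have horth' : ⟪v₂, v₁⟫_ℂ = 0 := inner_eq_zero_symm.mp horth
  rw [← sub_eq_zero, ← inner_self_eq_zero (𝕜 := ℂ)]
  have hw' : ((‖⟪v₁, w⟫_ℂ‖ : ℂ)) ^ 2 + (‖⟪v₂, w⟫_ℂ‖ : ℂ) ^ 2 = (‖w‖ : ℂ) ^ 2 := by
    exact_mod_cast hw
  simp only [inner_sub_left, inner_sub_right, inner_add_left, inner_add_right, inner_smul_left,
    inner_smul_right, horth, horth']
  simp only [inner_self_eq_norm_sq_to_K, hv₁, hv₂]
  rw [← inner_conj_symm w v₁, ← inner_conj_symm w v₂]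
  have h₁ := Complex.mul_conj' ⟪v₁, w⟫_ℂ
  have h₂ := Complex.mul_conj' ⟪v₂, w⟫_ℂ
  simp only [Complex.coe_algebraMap, Complex.ofReal_one]
  linear_combination -hw' - h₁ - h₂

/-- Gauge fixing: if a transition-probability-preserving map of projectivizations sends
the rays of orthonormal vectors `e₁, e₂` to the rays of unit vectors `v₁, v₂`, then it
sends the ray of `e₁ + e₂` to the ray of `v₁ + k • v₂` for some phase `k`. -/
theorem transition_preserving_sum_ray
    {X Y : Type*}
    [NormedAddCommGroup X] [InnerProductSpace ℂ X]
    [NormedAddCommGroup Y] [InnerProductSpace ℂ Y]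
    (f : Projectivization ℂ X → Projectivization ℂ Y)
    (hf : ∀ (v w : X) (hv : v ≠ 0) (hw : w ≠ 0),
      ‖⟪(f (Projectivization.mk ℂ v hv)).rep, (f (Projectivization.mk ℂ w hw)).rep⟫_ℂ‖ ^ 2 /
          (‖(f (Projectivization.mk ℂ v hv)).rep‖ ^ 2 *
            ‖(f (Projectivization.mk ℂ w hw)).rep‖ ^ 2)
        = ‖⟪v, w⟫_ℂ‖ ^ 2 / (‖v‖ ^ 2 * ‖w‖ ^ 2))
    (e₁ e₂ : X) (he₁ : ‖e₁‖ = 1) (he₂ : ‖e₂‖ = 1) (horth : ⟪e₁, e₂⟫_ℂ = 0)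
    (v₁ v₂ : Y) (hv₁ : ‖v₁‖ = 1) (hv₂ : ‖v₂‖ = 1)
    (hf₁ : f (Projectivization.mk ℂ e₁ (fun h => by simp [h] at he₁)) =
      Projectivization.mk ℂ v₁ (fun h => by simp [h] at hv₁))
    (hf₂ : f (Projectivization.mk ℂ e₂ (fun h => by simp [h] at he₂)) =
      Projectivization.mk ℂ v₂ (fun h => by simp [h] at hv₂)) :
    ∃ k : ℂ, ‖k‖ = 1 ∧ ∃ hsum : v₁ + k • v₂ ≠ 0,
      f (Projectivization.mk ℂ (e₁ + e₂) (by
        intro hzero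
        have h1 : ⟪e₁, e₁ + e₂⟫_ℂ = 1 := by
          rw [inner_add_right, horth, add_zero, inner_self_eq_norm_sq_to_K, he₁]
          norm_num
        rw [hzero, inner_zero_right] at h1
        exact one_ne_zero h1.symm)) = Projectivization.mk ℂ (v₁ + k • v₂) hsum := by
  have he₁₀ : e₁ ≠ 0 := fun h => by simp [h] at he₁
  have he₂₀ : e₂ ≠ 0 := fun h => by simp [h] at he₂
  have horth' : ⟪e₂, e₁⟫_ℂ = 0 := inner_eq_zero_symm.mp horth
  have hnorm : ‖e₁ + e₂‖ ^ 2 = 2 := by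
    rw [sq, norm_add_sq_eq_norm_sq_add_norm_sq_of_inner_eq_zero e₁ e₂ horth, he₁, he₂]
    norm_num
  have hsum₀ : e₁ + e₂ ≠ 0 := fun h => by simp [h] at hnorm
  have hvorth : ⟪v₁, v₂⟫_ℂ = 0 := by
    have h := hf e₁ e₂ he₁₀ he₂₀
    rw [hf₁, hf₂, transition_probability_rep_mk] at h
    simpa [horth, hv₁, hv₂] using h
  obtain ⟨w, hw₀, hw⟩ : ∃ (w : Y) (hw₀ : w ≠ 0),
      f (Projectivization.mk ℂ (e₁ + e₂) hsum₀) = Projectivization.mk ℂ w hw₀ :=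
    ⟨_, Projectivization.rep_nonzero _, (Projectivization.mk_rep _).symm⟩
  have hwn : ‖w‖ ≠ 0 := norm_ne_zero_iff.mpr hw₀
  have h₁ : ‖⟪v₁, w⟫_ℂ‖ ^ 2 = ‖w‖ ^ 2 / 2 := by
    have h := hf e₁ (e₁ + e₂) he₁₀ hsum₀
    rw [hf₁, hw, transition_probability_rep_mk, hnorm, inner_add_right, horth,
      inner_self_eq_norm_sq_to_K, he₁, hv₁] at h
    norm_num at h
    field_simp at h ⊢
    linarith
  have h₂ : ‖⟪v₂, w⟫_ℂ‖ ^ 2 = ‖w‖ ^ 2 / 2 := by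
    have h := hf e₂ (e₁ + e₂) he₂₀ hsum₀
    rw [hf₂, hw, transition_probability_rep_mk, hnorm, inner_add_right, horth',
      inner_self_eq_norm_sq_to_K, he₂, hv₂] at h
    norm_num at h
    field_simp at h ⊢
    linarith
  have hexp := eq_add_of_norm_inner_sq_add_eq hv₁ hv₂ hvorth (w := w) (by rw [h₁, h₂]; ring)
  have ha : ⟪v₁, w⟫_ℂ ≠ 0 := fun h => by
    have h' := h₁.symm
    simp [h, hw₀] at h'
  have hab : ‖⟪v₂, w⟫_ℂ‖ = ‖⟪v₁, w⟫_ℂ‖ :=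
    (sq_eq_sq₀ (norm_nonneg _) (norm_nonneg _)).mp (h₂.trans h₁.symm)
  have hsmul : ⟪v₁, w⟫_ℂ • (v₁ + (⟪v₂, w⟫_ℂ / ⟪v₁, w⟫_ℂ) • v₂) = w := by
    rw [smul_add, smul_smul, mul_div_cancel₀ _ ha, ← hexp]
  refine ⟨⟪v₂, w⟫_ℂ / ⟪v₁, w⟫_ℂ, ?_, fun h => hw₀ ?_, ?_⟩
  · rw [norm_div, hab, div_self (norm_ne_zero_iff.mpr ha)]
  · rw [← hsmul, h, smul_zero]
  · rw [hw, Projectivization.mk_eq_mk_iff']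
    exact ⟨_, hsmul⟩
end

section
/- Let X and Y be complex inner product spaces and let f : Projectivization ℂ X → Projectivization ℂ Y be a map that preserves transition probabilities. Let e₁, e₂ ∈ X be orthonormal (unit vectors with ⟪e₁,e₂⟫ = 0) and let v₁, v₂ ∈ Y be unit vectors satisfying f (mk e₁) = mk v₁, f (mk e₂) = mk v₂, and f (mk (e₁ + e₂)) = mk (v₁ + v₂). Then for every nonzero c ∈ ℂ there exists τ ∈ ℂ with f (mk (e₁ + c • e₂)) = mk (v₁ + τ • v₂) and either τ = c or τ = starRingEnd ℂ c (the complex conjugate of c). -/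
open scoped InnerProductSpace

/-- The transition probability of two rays does not depend on the chosen representatives. -/
theorem Projectivization.transitionProbability_rep_mk {E : Type*}
    [NormedAddCommGroup E] [InnerProductSpace ℂ E] {p q : E} (hp : p ≠ 0) (hq : q ≠ 0) :
    ‖⟪(Projectivization.mk ℂ p hp).rep, (Projectivization.mk ℂ q hq).rep⟫_ℂ‖ ^ 2 /
        (‖(Projectivization.mk ℂ p hp).rep‖ ^ 2 * ‖(Projectivization.mk ℂ q hq).rep‖ ^ 2)
      = ‖⟪p, q⟫_ℂ‖ ^ 2 / (‖p‖ ^ 2 * ‖q‖ ^ 2) := by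
  obtain ⟨a, ha⟩ := Projectivization.exists_smul_eq_mk_rep ℂ p hp
  obtain ⟨b, hb⟩ := Projectivization.exists_smul_eq_mk_rep ℂ q hq
  have ha0 : ‖(a : ℂ)‖ ≠ 0 := norm_ne_zero_iff.2 a.ne_zero
  have hb0 : ‖(b : ℂ)‖ ≠ 0 := norm_ne_zero_iff.2 b.ne_zero
  have hp0 : ‖p‖ ≠ 0 := norm_ne_zero_iff.2 hp
  have hq0 : ‖q‖ ≠ 0 := norm_ne_zero_iff.2 hq
  rw [← ha, ← hb, Units.smul_def, Units.smul_def, inner_smul_left, inner_smul_right]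
  simp only [norm_mul, norm_smul, RCLike.norm_conj]
  field_simp

/-- The equality case of Bessel's inequality for two orthonormal vectors. -/
theorem eq_inner_smul_add_inner_smul_of_norm_sq_eq {E : Type*}
    [NormedAddCommGroup E] [InnerProductSpace ℂ E] {v w u : E}
    (hv : ‖v‖ = 1) (hw : ‖w‖ = 1) (hvw : ⟪v, w⟫_ℂ = 0)
    (hu : ‖⟪v, u⟫_ℂ‖ ^ 2 + ‖⟪w, u⟫_ℂ‖ ^ 2 = ‖u‖ ^ 2) :
    u = ⟪v, u⟫_ℂ • v + ⟪w, u⟫_ℂ • w := by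
  have hwv : ⟪w, v⟫_ℂ = 0 := inner_eq_zero_symm.1 hvw
  rw [← sub_eq_zero, ← inner_self_eq_zero (𝕜 := ℂ)]
  have hu' : (‖⟪v, u⟫_ℂ‖ : ℂ) ^ 2 + (‖⟪w, u⟫_ℂ‖ : ℂ) ^ 2 = (‖u‖ : ℂ) ^ 2 := by
    exact_mod_cast hu
  rw [← Complex.mul_conj', ← Complex.mul_conj'] at hu'
  have huu : ⟪u, u⟫_ℂ = (‖u‖ : ℂ) ^ 2 := inner_self_eq_norm_sq_to_K u
  have hvv : ⟪v, v⟫_ℂ = 1 := by simp [inner_self_eq_norm_sq_to_K, hv]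
  have hww : ⟪w, w⟫_ℂ = 1 := by simp [inner_self_eq_norm_sq_to_K, hw]
  simp only [inner_sub_left, inner_sub_right, inner_add_left, inner_add_right,
    inner_smul_left, inner_smul_right, hvw, hwv, hvv, hww, huu, ← inner_conj_symm u v,
    ← inner_conj_symm u w]
  linear_combination -hu'

/-- A complex number is determined up to conjugation by its distances from `0` and `-1`. -/
theorem Complex.eq_or_eq_conj_of_norm_eq_of_norm_one_add_eq {z c : ℂ}
    (h : ‖z‖ ^ 2 = ‖c‖ ^ 2) (h₁ : ‖1 + z‖ ^ 2 = ‖1 + c‖ ^ 2) :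
    z = c ∨ z = (starRingEnd ℂ) c := by
  simp only [Complex.sq_norm, Complex.normSq_apply, Complex.add_re, Complex.add_im,
    Complex.one_re, Complex.one_im] at h h₁
  have hre : z.re = c.re := by linarith
  have him : z.im * z.im = c.im * c.im := by rw [hre] at h; linarith
  rcases mul_self_eq_mul_self_iff.1 him with him | him
  · exact Or.inl (Complex.ext hre him)
  · exact Or.inr (Complex.ext (by simpa using hre) (by simpa using him))

/-- The squared norm of `v + c • w` for orthonormal `v` and `w`. -/
theorem norm_add_smul_sq_of_orthonormal {E : Type*}
    [NormedAddCommGroup E] [InnerProductSpace ℂ E] {v w : E}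
    (hv : ‖v‖ = 1) (hw : ‖w‖ = 1) (hvw : ⟪v, w⟫_ℂ = 0) (c : ℂ) :
    ‖v + c • w‖ ^ 2 = 1 + ‖c‖ ^ 2 := by
  have h := norm_add_sq_eq_norm_sq_add_norm_sq_of_inner_eq_zero v (c • w)
    (by rw [inner_smul_right, hvw, mul_zero])
  rw [norm_smul, hv, hw] at h
  linarith

/-- With the gauge fixed on `e₁ + e₂`, a transition-probability-preserving map of
projectivizations sends the ray of `e₁ + c • e₂` to the ray of `v₁ + τ • v₂` where `τ`
is either `c` or its complex conjugate. -/
theorem transition_preserving_linear_or_antilinear_coefficient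
    {X Y : Type*}
    [NormedAddCommGroup X] [InnerProductSpace ℂ X]
    [NormedAddCommGroup Y] [InnerProductSpace ℂ Y]
    (f : Projectivization ℂ X → Projectivization ℂ Y)
    (hf : ∀ (v w : X) (hv : v ≠ 0) (hw : w ≠ 0),
      ‖⟪(f (Projectivization.mk ℂ v hv)).rep, (f (Projectivization.mk ℂ w hw)).rep⟫_ℂ‖ ^ 2 /
          (‖(f (Projectivization.mk ℂ v hv)).rep‖ ^ 2 *
            ‖(f (Projectivization.mk ℂ w hw)).rep‖ ^ 2)
        = ‖⟪v, w⟫_ℂ‖ ^ 2 / (‖v‖ ^ 2 * ‖w‖ ^ 2))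
    (e₁ e₂ : X) (he₁ : ‖e₁‖ = 1) (he₂ : ‖e₂‖ = 1) (horth : ⟪e₁, e₂⟫_ℂ = 0)
    (v₁ v₂ : Y) (hv₁ : ‖v₁‖ = 1) (hv₂ : ‖v₂‖ = 1)
    (hf₁ : f (Projectivization.mk ℂ e₁ (fun h => by simp [h] at he₁)) =
      Projectivization.mk ℂ v₁ (fun h => by simp [h] at hv₁))
    (hf₂ : f (Projectivization.mk ℂ e₂ (fun h => by simp [h] at he₂)) =
      Projectivization.mk ℂ v₂ (fun h => by simp [h] at hv₂))
    (hsum : v₁ + v₂ ≠ 0)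
    (hf₁₂ : f (Projectivization.mk ℂ (e₁ + e₂) (by
        intro hzero
        have h1 : ⟪e₁, e₁ + e₂⟫_ℂ = 1 := by
          rw [inner_add_right, horth, add_zero, inner_self_eq_norm_sq_to_K, he₁]
          norm_num
        rw [hzero, inner_zero_right] at h1
        exact one_ne_zero h1.symm)) = Projectivization.mk ℂ (v₁ + v₂) hsum) :
    ∀ c : ℂ, c ≠ 0 →
      ∃ τ : ℂ, (τ = c ∨ τ = (starRingEnd ℂ) c) ∧
        ∃ hτ : v₁ + τ • v₂ ≠ 0,
          f (Projectivization.mk ℂ (e₁ + c • e₂) (by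
            intro hzero
            have h1 : ⟪e₁, e₁ + c • e₂⟫_ℂ = 1 := by
              rw [inner_add_right, inner_smul_right, horth, mul_zero, add_zero,
                inner_self_eq_norm_sq_to_K, he₁]
              norm_num
            rw [hzero, inner_zero_right] at h1
            exact one_ne_zero h1.symm)) = Projectivization.mk ℂ (v₁ + τ • v₂) hτ := by
  intro c _
  have hP : ∀ {v w : X} {p q : Y} (hv : v ≠ 0) (hw : w ≠ 0) (hp : p ≠ 0) (hq : q ≠ 0),
      f (Projectivization.mk ℂ v hv) = Projectivization.mk ℂ p hp →
      f (Projectivization.mk ℂ w hw) = Projectivization.mk ℂ q hq →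
      ‖⟪p, q⟫_ℂ‖ ^ 2 / (‖p‖ ^ 2 * ‖q‖ ^ 2) = ‖⟪v, w⟫_ℂ‖ ^ 2 / (‖v‖ ^ 2 * ‖w‖ ^ 2) := by
    intro v w p q hv hw hp hq hvp hwq
    rw [← hf v w hv hw, hvp, hwq, Projectivization.transitionProbability_rep_mk]
  have hpos : 0 < 1 + ‖c‖ ^ 2 := by positivity
  have he₁₁ : ⟪e₁, e₁⟫_ℂ = 1 := by simp [inner_self_eq_norm_sq_to_K, he₁]
  have he₂₂ : ⟪e₂, e₂⟫_ℂ = 1 := by simp [inner_self_eq_norm_sq_to_K, he₂]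
  have horth' : ⟪e₂, e₁⟫_ℂ = 0 := inner_eq_zero_symm.1 horth
  have hec := norm_add_smul_sq_of_orthonormal he₁ he₂ horth c
  have hc0 : e₁ + c • e₂ ≠ 0 := fun h => by simp [h] at hec; linarith
  have hvorth : ⟪v₁, v₂⟫_ℂ = 0 := by
    simpa [hv₁, hv₂, he₁, he₂, horth] using hP _ _ _ _ hf₁ hf₂
  have he : ‖e₁ + e₂‖ ^ 2 = 2 := by
    have h := norm_add_smul_sq_of_orthonormal he₁ he₂ horth 1
    norm_num at h
    exact h
  have hv : ‖v₁ + v₂‖ ^ 2 = 2 := by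
    have h := norm_add_smul_sq_of_orthonormal hv₁ hv₂ hvorth 1
    norm_num at h
    exact h
  obtain ⟨u, hu0, hu⟩ : ∃ (u : Y) (hu0 : u ≠ 0),
      f (Projectivization.mk ℂ (e₁ + c • e₂) hc0) = Projectivization.mk ℂ u hu0 :=
    ⟨_, Projectivization.rep_nonzero _, (Projectivization.mk_rep _).symm⟩
  have hN : 0 < ‖u‖ ^ 2 := by positivity
  have ha := hP _ _ _ _ hf₁ hu
  have hb := hP _ _ _ _ hf₂ hu
  have hab := hP _ _ _ _ hf₁₂ hu
  simp only [he, hv, hec, he₁, he₂, hv₁, hv₂, inner_add_left, inner_add_right,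
    inner_smul_right, he₁₁, he₂₂, horth, horth', mul_zero, mul_one, zero_add, add_zero,
    norm_one, one_pow, one_mul] at ha hb hab
  have hdecomp := eq_inner_smul_add_inner_smul_of_norm_sq_eq (u := u) hv₁ hv₂ hvorth (by
    field_simp at ha hb
    have hsum : (‖⟪v₁, u⟫_ℂ‖ ^ 2 + ‖⟪v₂, u⟫_ℂ‖ ^ 2) * (1 + ‖c‖ ^ 2)
      = ‖u‖ ^ 2 * (1 + ‖c‖ ^ 2) := by linarith
    exact mul_right_cancel₀ hpos.ne' hsum)
  generalize ⟪v₁, u⟫_ℂ = a at ha hab hdecomp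
  generalize ⟪v₂, u⟫_ℂ = b at hb hab hdecomp
  have ha0 : a ≠ 0 := by
    rintro rfl
    simp at ha
    linarith
  have hau : ‖a‖ ^ 2 * (1 + ‖c‖ ^ 2) = ‖u‖ ^ 2 := by
    field_simp at ha
    linarith
  have hapos : 0 < ‖a‖ ^ 2 := by positivity
  rw [← hau] at hb hab
  have hu' : u = a • (v₁ + (b / a) • v₂) := by
    rw [smul_add, smul_smul, mul_div_cancel₀ b ha0, ← hdecomp]
  have hτ0 : v₁ + (b / a) • v₂ ≠ 0 := fun h => hu0 (by rw [hu', h, smul_zero])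
  refine ⟨b / a, Complex.eq_or_eq_conj_of_norm_eq_of_norm_one_add_eq ?_ ?_, hτ0, ?_⟩
  · rw [norm_div, div_pow]
    field_simp at hb ⊢
    linarith
  · have h1 : 1 + b / a = (a + b) / a := by field_simp
    rw [h1, norm_div, div_pow]
    field_simp at hab ⊢
    linarith
  · rw [hu, Projectivization.mk_eq_mk_iff']
    exact ⟨a, hu'.symm⟩
end

section
/- Let E be a finite-dimensional complex inner product space, let ψ ∈ E with ‖ψ‖ = 1, and let Pψ : E →ₗ[ℂ] E be the rank-one projection Pψ x = ⟪ψ, x⟫ • ψ. Let ι be a finite index type, p : ι → ℝ with pᵢ ≥ 0 and ∑ᵢ pᵢ = 1, and ρ : ι → (E →ₗ[ℂ] E) a family of density operators, i.e. each ρᵢ is self-adjoint, positive semidefinite (0 ≤ re ⟪x, ρᵢ x⟫ for all x), and has trace 1. If ∑ᵢ pᵢ • ρᵢ = Pψ, then ρᵢ = Pψ for every i with pᵢ ≠ 0; in other words, a pure state is an extreme point of the convex set of density operators. -/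
open scoped InnerProductSpace

/-- A positive semidefinite symmetric operator annihilates the vectors on which its quadratic
form vanishes. -/
theorem LinearMap.IsPositive.apply_eq_zero_of_re_inner_eq_zero
    {𝕜 E : Type*} [RCLike 𝕜] [NormedAddCommGroup E] [InnerProductSpace 𝕜 E] {T : E →ₗ[𝕜] E}
    (hT : T.IsPositive) {x : E} (hx : RCLike.re ⟪x, T x⟫_𝕜 = 0) : T x = 0 := by
  have hquad (t : ℝ) :
      0 ≤ RCLike.re ⟪T x, T (T x)⟫_𝕜 * (t * t) + 2 * ‖T x‖ ^ 2 * t + 0 := by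
    have h := hT.re_inner_nonneg_right (x + (t : 𝕜) • T x)
    have hsymm : ⟪x, T (T x)⟫_𝕜 = ⟪T x, T x⟫_𝕜 := (hT.isSymmetric x (T x)).symm
    simp only [map_add, map_smul, inner_add_left, inner_add_right, inner_smul_left,
      inner_smul_right, RCLike.conj_ofReal, RCLike.re_ofReal_mul, hsymm, hx,
      inner_self_eq_norm_sq] at h
    linarith
  have hdisc := discrim_le_zero hquad
  have hsq : (2 * ‖T x‖ ^ 2) ^ 2 = 0 :=
    le_antisymm (by simpa [discrim] using hdisc) (sq_nonneg _)
  simpa using hsq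

/-- A symmetric operator that vanishes on the orthogonal complement of a unit vector `ψ` is a
scalar multiple of the projection onto `ψ`. -/
theorem LinearMap.IsSymmetric.apply_eq_smul_of_forall_orthogonal
    {𝕜 E : Type*} [RCLike 𝕜] [NormedAddCommGroup E] [InnerProductSpace 𝕜 E] {T : E →ₗ[𝕜] E}
    (hT : T.IsSymmetric) {ψ : E} (hψ : ‖ψ‖ = 1) (hker : ∀ x, ⟪ψ, x⟫_𝕜 = 0 → T x = 0) (x : E) :
    T x = ⟪ψ, T ψ⟫_𝕜 • ⟪ψ, x⟫_𝕜 • ψ := by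
  have horth (z : E) : ⟪ψ, z - ⟪ψ, z⟫_𝕜 • ψ⟫_𝕜 = 0 := by
    simp [inner_sub_right, inner_smul_right, inner_self_eq_norm_sq_to_K, hψ]
  have hTx : T x = ⟪ψ, x⟫_𝕜 • T ψ := by
    simpa [sub_eq_zero] using hker _ (horth x)
  have hTψ : T ψ = ⟪ψ, T ψ⟫_𝕜 • ψ := by
    set y := T ψ - ⟪ψ, T ψ⟫_𝕜 • ψ with hy
    have hyψ : ⟪y, ψ⟫_𝕜 = 0 := inner_eq_zero_symm.mp (horth (T ψ))
    have hyy : ⟪y, y⟫_𝕜 = 0 := by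
      conv_lhs => rw [hy, inner_sub_right, inner_smul_right, ← hy, hyψ, ← hT y ψ,
        hker y (horth (T ψ))]
      simp
    exact sub_eq_zero.mp (inner_self_eq_zero.mp hyy)
  rw [hTx, smul_comm, ← hTψ]

/-- A pure state is an extreme point of the set of density operators: if a convex
mixture of density operators equals the rank-one projection onto a unit vector `ψ`,
then every component with nonzero weight equals that projection. -/
theorem pure_state_extreme_point
    {E : Type*} [NormedAddCommGroup E] [InnerProductSpace ℂ E] [FiniteDimensional ℂ E]
    (ψ : E) (hψ : ‖ψ‖ = 1)
    (Pψ : E →ₗ[ℂ] E) (hP : ∀ x : E, Pψ x = ⟪ψ, x⟫_ℂ • ψ)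
    {ι : Type*} [Fintype ι]
    (p : ι → ℝ) (hp0 : ∀ i, 0 ≤ p i) (hp1 : ∑ i, p i = 1)
    (ρ : ι → (E →ₗ[ℂ] E))
    (hsa : ∀ i, LinearMap.IsSymmetric (ρ i))
    (hpos : ∀ (i : ι) (x : E), 0 ≤ (⟪x, ρ i x⟫_ℂ).re)
    (htr : ∀ i, LinearMap.trace ℂ E (ρ i) = 1)
    (hmix : ∑ i, p i • ρ i = Pψ) :
    ∀ i, p i ≠ 0 → ρ i = Pψ := by
  intro i hi
  have hker (x : E) (hx : ⟪ψ, x⟫_ℂ = 0) : ρ i x = 0 := by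
    have hsum : ∑ j, p j * (⟪x, ρ j x⟫_ℂ).re = 0 := by
      have h := congrArg (fun T : E →ₗ[ℂ] E => (⟪x, T x⟫_ℂ).re) hmix
      simpa [LinearMap.sum_apply, inner_sum, hP, hx, inner_smul_right_eq_smul] using h
    have hterm := (Finset.sum_eq_zero_iff_of_nonneg
      fun j _ => mul_nonneg (hp0 j) (hpos j x)).mp hsum i (Finset.mem_univ i)
    have hT : (ρ i).IsPositive := ⟨hsa i, fun y => by
      rw [hsa i y y]
      exact hpos i y⟩
    exact hT.apply_eq_zero_of_re_inner_eq_zero ((mul_eq_zero.mp hterm).resolve_left hi)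
  have hscalar : ρ i = ⟪ψ, ρ i ψ⟫_ℂ • Pψ := by
    ext x
    rw [LinearMap.smul_apply, hP]
    exact (hsa i).apply_eq_smul_of_forall_orthogonal hψ hker x
  have htrP : LinearMap.trace ℂ E Pψ = 1 := by
    simp only [← hmix, map_sum, LinearMap.map_smul_of_tower, htr, ← Finset.sum_smul, hp1, one_smul]
  have hone : ⟪ψ, ρ i ψ⟫_ℂ = 1 := by
    have h := congrArg (LinearMap.trace ℂ E) hscalar
    rw [map_smul, htr, htrP, smul_eq_mul, mul_one] at h
    exact h.symm
  rw [hscalar, hone, one_smul]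
end
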